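/- Let Z be a closed subspace of L¹[0,1] that contains no subspace isomorphic (linearly homeomorphic) to ℓ¹. Then Z is reflexive, and the quotient space L¹[0,1]/Z has the Daugavet property. -/

import Mathlib

open MeasureTheory

/-- Lebesgue measure restricted to `[0,1]`. -/
noncomputable def mu01 : Measure ℝ := volume.restrict (Set.Icc 0 1)

/-- The Banach space `L¹[0,1]` of Lebesgue integrable functions on `[0,1]`. -/
noncomputable abbrev L1 : Type := Lp ℝ 1 mu01

/-- The Banach space `ℓ¹` of absolutely summable real sequences. -/
abbrev ell1 : Type := lp (fun _ : ℕ => ℝ) 1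

/-- A normed space `X` has the Daugavet property if `‖Id + T‖ = 1 + ‖T‖` for every
rank-one bounded linear operator `T : X → X`. -/
def DaugavetProperty (X : Type*) [SeminormedAddCommGroup X] [NormedSpace ℝ X] : Prop :=
  ∀ (f : X →L[ℝ] ℝ) (x : X),
    ‖ContinuousLinearMap.id ℝ X + f.smulRight x‖ = 1 + ‖f.smulRight x‖


namespace QD

instance : IsFiniteMeasure mu01 := by unfold mu01; infer_instance

/-- Multiplication by the indicator of `A`, on `L¹`. -/
noncomputable def P (A : Set ℝ) (hA : MeasurableSet A) : L1 →ₗ[ℝ] L1 where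
  toFun h := ((Lp.memLp h).indicator hA).toLp _
  map_add' f g := by
    rw [← MemLp.toLp_add]
    apply MemLp.toLp_congr
    filter_upwards [Lp.coeFn_add f g] with x hx
    by_cases h : x ∈ A
    · simpa only [Pi.add_apply, Set.indicator_of_mem h] using hx
    · simp [h]
  map_smul' c f := by
    rw [RingHom.id_apply, ← MemLp.toLp_const_smul]
    apply MemLp.toLp_congr
    filter_upwards [Lp.coeFn_smul c f] with x hx
    by_cases h : x ∈ A
    · simpa only [Pi.smul_apply, Set.indicator_of_mem h] using hx
    · simp [h]

lemma P_apply (A : Set ℝ) (hA : MeasurableSet A) (h : L1) :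
    P A hA h = ((Lp.memLp h).indicator hA).toLp _ := rfl

lemma P_coe (A : Set ℝ) (hA : MeasurableSet A) (h : L1) :
    P A hA h =ᵐ[mu01] A.indicator h := by
  rw [P_apply]
  have h1 : MemLp (A.indicator h) 1 mu01 := (Lp.memLp h).indicator hA
  exact h1.coeFn_toLp

lemma norm_P (A : Set ℝ) (hA : MeasurableSet A) (h : L1) :
    ‖P A hA h‖ = ∫ x in A, ‖h x‖ ∂mu01 := by
  rw [L1.norm_eq_integral_norm, ← integral_indicator hA]
  apply integral_congr_ae
  filter_upwards [P_coe A hA h] with x hx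
  rw [hx, norm_indicator_eq_indicator_norm]

lemma P_mono {A B : Set ℝ} (hA : MeasurableSet A) (hB : MeasurableSet B) (h : L1)
    (hAB : A ⊆ B) : ‖P A hA h‖ ≤ ‖P B hB h‖ := by
  rw [norm_P, norm_P]
  exact setIntegral_mono_set (L1.integrable_coeFn h).norm.integrableOn
    (Filter.Eventually.of_forall fun x => norm_nonneg _) (Filter.Eventually.of_forall hAB)

lemma P_union {A B : Set ℝ} (hA : MeasurableSet A) (hB : MeasurableSet B) (h : L1)
    (hAB : Disjoint A B) : ‖P (A ∪ B) (hA.union hB) h‖ = ‖P A hA h‖ + ‖P B hB h‖ := by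
  simp only [norm_P]
  exact setIntegral_union hAB hB (L1.integrable_coeFn h).norm.integrableOn
    (L1.integrable_coeFn h).norm.integrableOn

lemma P_univ (h : L1) : P Set.univ MeasurableSet.univ h = h := by
  apply Lp.ext
  filter_upwards [P_coe Set.univ MeasurableSet.univ h] with x hx
  simp [hx]

lemma P_le (A : Set ℝ) (hA : MeasurableSet A) (h : L1) : ‖P A hA h‖ ≤ ‖h‖ := by
  conv_rhs => rw [← P_univ h]
  exact P_mono _ _ _ (Set.subset_univ _)

lemma P_sum {ι : Type*} (s : Finset ι) (A : ι → Set ℝ) (hA : ∀ i, MeasurableSet (A i))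
    (hd : Set.Pairwise (↑s) (Function.onFun Disjoint A)) (h : L1) :
    ∑ i ∈ s, ‖P (A i) (hA i) h‖
      = ‖P (⋃ i ∈ s, A i) (s.measurableSet_biUnion fun i _ => hA i) h‖ := by
  simp only [norm_P]
  rw [integral_biUnion_finset s (fun i _ => hA i) hd
    (fun i _ => (L1.integrable_coeFn h).norm.integrableOn)]

lemma P_ac (h : L1) {ε : ℝ} (hε : 0 < ε) :
    ∃ δ > 0, ∀ A (hA : MeasurableSet A), mu01.real A ≤ δ → ‖P A hA h‖ ≤ ε := by
  have hi := (L1.integrable_coeFn h)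
  obtain ⟨δ, hδ, H⟩ := exists_pos_setLIntegral_lt_of_measure_lt
    (f := fun x => ‖h x‖ₑ) (μ := mu01) hi.2.ne (ε := ENNReal.ofReal ε) (by simpa using hε)
  obtain ⟨d, hd0, hd⟩ := ENNReal.lt_iff_exists_real_btwn.1 hδ
  have hd' : 0 < d := by simpa using hd.1
  refine ⟨d, hd', fun A hA hm => ?_⟩
  have h1 : mu01 A < δ := by
    refine lt_of_le_of_lt ?_ hd.2
    rw [← ofReal_measureReal]
    exact ENNReal.ofReal_le_ofReal hm
  have h2 := H A h1
  rw [norm_P, integral_norm_eq_lintegral_enorm hi.1.restrict]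
  exact (ENNReal.toReal_le_of_le_ofReal hε.le h2.le)

/-- Equi-integrability of the unit ball of `Z`. -/
def EI (Z : Submodule ℝ L1) : Prop :=
  ∀ ε > 0, ∃ δ > 0, ∀ z ∈ Z, ‖z‖ ≤ 1 → ∀ A (hA : MeasurableSet A),
    mu01.real A ≤ δ → ‖P A hA z‖ ≤ ε

/-- Abstract lower estimate. -/
lemma lower {N : ℕ} (f : ℕ → L1) (B : ℕ → Set ℝ) (hB : ∀ i, MeasurableSet (B i))
    (hd : Set.Pairwise (↑(Finset.range N)) (Function.onFun Disjoint B)) (c d : ℝ)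
    (h1 : ∀ k < N, c ≤ ‖P (B k) (hB k) (f k)‖)
    (h2 : ∀ k < N, ∑ i ∈ Finset.range N, ‖P (B i) (hB i) (f k)‖ ≤ d) (a : ℕ → ℝ) :
    (2 * c - d) * ∑ k ∈ Finset.range N, |a k| ≤ ‖∑ k ∈ Finset.range N, a k • f k‖ := by
  set s := Finset.range N
  set h := ∑ k ∈ s, a k • f k with hh
  have key : ∀ i ∈ s, 2 * |a i| * ‖P (B i) (hB i) (f i)‖
      - ∑ k ∈ s, |a k| * ‖P (B i) (hB i) (f k)‖ ≤ ‖P (B i) (hB i) h‖ := by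
    intro i hi
    have e : P (B i) (hB i) h = a i • P (B i) (hB i) (f i)
        + ∑ k ∈ s.erase i, a k • P (B i) (hB i) (f k) := by
      rw [hh, map_sum, Finset.add_sum_erase s (fun k => a k • P (B i) (hB i) (f k)) hi]
      simp
    have e1 : ‖∑ k ∈ s.erase i, a k • P (B i) (hB i) (f k)‖
        ≤ ∑ k ∈ s.erase i, |a k| * ‖P (B i) (hB i) (f k)‖ := by
      refine (norm_sum_le _ _).trans (Finset.sum_le_sum fun k _ => ?_)
      rw [norm_smul, Real.norm_eq_abs]
    have e2 := Finset.add_sum_erase s (fun k => |a k| * ‖P (B i) (hB i) (f k)‖) hi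
    have e3 : ‖a i • P (B i) (hB i) (f i)‖ = |a i| * ‖P (B i) (hB i) (f i)‖ := by
      rw [norm_smul, Real.norm_eq_abs]
    have e4 := norm_sub_le (P (B i) (hB i) h) (∑ k ∈ s.erase i, a k • P (B i) (hB i) (f k))
    rw [e, add_sub_cancel_right, ← e] at e4
    linarith
  calc (2 * c - d) * ∑ k ∈ s, |a k|
      ≤ ∑ k ∈ s, |a k| * (2 * ‖P (B k) (hB k) (f k)‖ - ∑ i ∈ s, ‖P (B i) (hB i) (f k)‖) := by
        rw [Finset.mul_sum]
        refine Finset.sum_le_sum fun k hk => ?_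
        rw [mul_comm]
        refine mul_le_mul_of_nonneg_left ?_ (abs_nonneg _)
        have := h1 k (Finset.mem_range.1 hk)
        have := h2 k (Finset.mem_range.1 hk)
        linarith
    _ = ∑ i ∈ s, (2 * |a i| * ‖P (B i) (hB i) (f i)‖
          - ∑ k ∈ s, |a k| * ‖P (B i) (hB i) (f k)‖) := by
        simp only [mul_sub, Finset.sum_sub_distrib, Finset.mul_sum]
        congr 1
        · exact Finset.sum_congr rfl fun k _ => by ring
        · exact Finset.sum_comm
    _ ≤ ∑ i ∈ s, ‖P (B i) (hB i) h‖ := Finset.sum_le_sum key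
    _ = _ := P_sum s B hB hd h
    _ ≤ ‖h‖ := P_le _ _ _

/-- A bounded sequence in `Z` with lower `ℓ¹`-estimate yields a copy of `ℓ¹`. -/
lemma ell1_of_lower (Z : Submodule ℝ L1) (hZc : IsClosed (Z : Set L1)) (f : ℕ → L1)
    (hf : ∀ k, f k ∈ Z) (hf1 : ∀ k, ‖f k‖ ≤ 1) (c : ℝ) (hc : 0 < c)
    (hl : ∀ N (a : ℕ → ℝ), c * ∑ k ∈ Finset.range N, |a k|
      ≤ ‖∑ k ∈ Finset.range N, a k • f k‖) :
    ∃ W : Submodule ℝ L1, W ≤ Z ∧ Nonempty (↥W ≃L[ℝ] ell1) := by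
  have habs : ∀ a : ell1, Summable fun n => |a n| := by
    intro a
    have := (memℓp_gen_iff (p := 1) (by norm_num)).1 (lp.memℓp a)
    simpa using this
  have hnorm : ∀ a : ell1, ‖a‖ = ∑' n, |a n| := by
    intro a
    rw [lp.norm_eq_tsum_rpow (by norm_num)]
    simp
  have hle : ∀ (a : ell1) n, ‖a n • f n‖ ≤ |a n| := by
    intro a n
    rw [norm_smul, Real.norm_eq_abs]
    exact mul_le_of_le_one_right (abs_nonneg _) (hf1 n)
  have hs : ∀ a : ell1, Summable fun n => a n • f n := fun a =>
    Summable.of_norm_bounded (habs a) (hle a)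
  let T : ell1 →ₗ[ℝ] L1 :=
    { toFun := fun a => ∑' n, a n • f n
      map_add' := by
        intro a b
        rw [← (hs a).tsum_add (hs b)]
        exact tsum_congr fun n => by simp [add_smul]
      map_smul' := by
        intro r a
        rw [RingHom.id_apply, ← (hs a).tsum_const_smul]
        exact tsum_congr fun n => by simp [mul_smul] }
  have hT : ∀ a, T a = ∑' n, a n • f n := fun _ => rfl
  let T' : ell1 →L[ℝ] L1 := T.mkContinuous 1 (by
    intro a
    rw [hT, hnorm, one_mul]
    exact tsum_of_norm_bounded (habs a).hasSum (hle a))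
  have hT' : ∀ a, T' a = ∑' n, a n • f n := fun _ => rfl
  have hlow : ∀ a, c * ‖a‖ ≤ ‖T' a‖ := by
    intro a
    rw [hT', hnorm]
    exact le_of_tendsto_of_tendsto' ((habs a).hasSum.tendsto_sum_nat.const_mul c)
      (hs a).hasSum.tendsto_sum_nat.norm (fun N => hl N a)
  have hanti : AntilipschitzWith (Real.toNNReal c⁻¹) T' := by
    apply ContinuousLinearMap.antilipschitz_of_bound
    intro a
    rw [Real.coe_toNNReal _ (by positivity), ← div_eq_inv_mul, le_div_iff₀ hc, mul_comm]
    exact hlow a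
  have hclosed : IsClosed (Set.range T') := hanti.isClosed_range T'.uniformContinuous
  refine ⟨T'.range, ?_, ⟨(T'.equivRange hanti.injective hclosed).symm⟩⟩
  rintro _ ⟨a, rfl⟩
  have : T' a ∈ closure (Z : Set L1) := by
    refine mem_closure_of_tendsto (hs a).hasSum.tendsto_sum_nat
      (Filter.Eventually.of_forall fun N => ?_)
    exact Z.sum_mem fun k _ => Z.smul_mem _ (hf k)
  rwa [hZc.closure_eq] at this

lemma ei_of_no_ell1 (Z : Submodule ℝ L1) (hZc : IsClosed (Z : Set L1))
    (hno : ¬ ∃ W : Submodule ℝ L1, W ≤ Z ∧ Nonempty (↥W ≃L[ℝ] ell1)) : EI Z := by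
  by_contra hE
  apply hno
  let S : Set ℝ := {t | ∃ δ > 0, ∀ z ∈ Z, ‖z‖ ≤ 1 → ∀ A (hA : MeasurableSet A),
    mu01.real A ≤ δ → ‖P A hA z‖ ≤ t}
  unfold EI at hE
  push Not at hE
  obtain ⟨ε, hε, hE⟩ := hE
  have hlb : ∀ t ∈ S, ε ≤ t := by
    rintro t ⟨δ, hδ, H⟩
    obtain ⟨z, hz, hz1, A, hA, hm, hlt⟩ := hE δ hδ
    exact hlt.le.trans (H z hz hz1 A hA hm)
  have hne : S.Nonempty := ⟨1, 1, one_pos, fun z _ hz1 A hA _ => (P_le A hA z).trans hz1⟩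
  have hbdd : BddBelow S := ⟨ε, hlb⟩
  set η := sInf S with hη
  have hη0 : 0 < η := lt_of_lt_of_le hε (le_csInf hne hlb)
  set r := η / 20 with hr
  have hr0 : 0 < r := by positivity
  obtain ⟨t, ⟨δ0, hδ0, H0⟩, ht⟩ := exists_lt_of_csInf_lt hne (show sInf S < η + r by linarith)
  have hpick : ∀ d : ℝ, 0 < d → ∃ z ∈ Z, ‖z‖ ≤ 1 ∧ ∃ A, ∃ hA : MeasurableSet A,
      mu01.real A ≤ d ∧ η - r < ‖P A hA z‖ := by
    intro d hd
    have : η - r ∉ S := fun h => by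
      have := csInf_le hbdd h
      linarith
    by_contra hcon
    push Not at hcon
    exact this ⟨d, hd, hcon⟩
  have hpick2 : ∀ d : {d : ℝ // 0 < d}, ∃ p : L1 × Set ℝ × {d : ℝ // 0 < d},
      p.1 ∈ Z ∧ ‖p.1‖ ≤ 1 ∧ (∃ hA : MeasurableSet p.2.1, mu01.real p.2.1 ≤ d ∧
        η - r < ‖P p.2.1 hA p.1‖) ∧ p.2.2.1 ≤ d / 2 ∧
        ∀ A (hA : MeasurableSet A), mu01.real A ≤ 2 * p.2.2.1 → ‖P A hA p.1‖ ≤ r := by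
    rintro ⟨d, hd⟩
    obtain ⟨z, hz, hz1, A, hA, hm, hlt⟩ := hpick d hd
    obtain ⟨δ, hδ, H⟩ := P_ac z hr0
    refine ⟨(z, A, ⟨min (d / 2) (δ / 2), by positivity⟩), hz, hz1, ⟨hA, hm, hlt⟩,
      min_le_left _ _, fun B hB hBm => H B hB ?_⟩
    have : min (d / 2) (δ / 2) ≤ δ / 2 := min_le_right _ _
    simp only at hBm
    linarith
  choose p hpZ hp1 hpA hpd hpac using hpick2
  let D : ℕ → {d : ℝ // 0 < d} := fun n => (fun d => (p d).2.2)^[n] ⟨δ0 / 2, by positivity⟩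
  have hD : ∀ n, D (n + 1) = (p (D n)).2.2 := fun n => Function.iterate_succ_apply' _ _ _
  have hDhalf : ∀ n, (D (n + 1) : ℝ) ≤ D n / 2 := fun n => by rw [hD]; exact hpd _
  let f : ℕ → L1 := fun n => (p (D n)).1
  let A : ℕ → Set ℝ := fun n => (p (D n)).2.1
  have hA : ∀ n, MeasurableSet (A n) := fun n => (hpA (D n)).1
  have hAm : ∀ n, mu01.real (A n) ≤ D n := fun n => (hpA (D n)).2.1
  have hAf : ∀ n, η - r < ‖P (A n) (hA n) (f n)‖ := fun n => (hpA (D n)).2.2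
  have hac : ∀ n B (hB : MeasurableSet B), mu01.real B ≤ 2 * D (n + 1) → ‖P B hB (f n)‖ ≤ r :=
    fun n B hB h => hpac (D n) B hB (by rw [← hD]; exact h)
  have hDsum : ∀ m k, ∑ i ∈ Finset.Ico k (k + m), (D i : ℝ) ≤ 2 * D k - 2 * D (k + m) := by
    intro m k
    induction m with
    | zero => simp
    | succ m ih =>
      rw [← add_assoc, Finset.sum_Ico_succ_top (by omega)]
      have := hDhalf (k + m)
      linarith
  have hDsum' : ∀ k N, ∑ i ∈ Finset.Ico k N, (D i : ℝ) ≤ 2 * D k := by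
    intro k N
    rcases le_or_gt k N with h | h
    · obtain ⟨m, rfl⟩ := Nat.exists_eq_add_of_le h
      have := hDsum m k
      have := (D (k + m)).2
      linarith
    · rw [Finset.Ico_eq_empty (by omega)]
      have := (D k).2
      simp
      linarith
  have hUm : ∀ k N, mu01.real (⋃ i ∈ Finset.Ico k N, A i) ≤ 2 * D k := fun k N =>
    (measureReal_biUnion_finset_le _ _).trans
      ((Finset.sum_le_sum fun i _ => hAm i).trans (hDsum' k N))
  refine ell1_of_lower Z hZc f (fun k => hpZ _) (fun k => hp1 _) (2 * (η - 2 * r) - (η + r))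
    (by rw [hr]; linarith) ?_
  intro N a
  have hUmeas : ∀ k, MeasurableSet (⋃ i ∈ Finset.Ico k N, A i) := fun k =>
    Finset.measurableSet_biUnion _ fun i _ => hA i
  let B : ℕ → Set ℝ := fun k => A k \ ⋃ i ∈ Finset.Ico (k + 1) N, A i
  have hB : ∀ k, MeasurableSet (B k) := fun k => (hA k).diff (hUmeas _)
  have hlt : ∀ i < N, ∀ j < N, i < j → Disjoint (B i) (B j) := by
    intro i hi j hj hij
    rw [Set.disjoint_left]
    intro x hx hx'
    apply hx.2
    simp only [Set.mem_iUnion]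
    exact ⟨j, Finset.mem_Ico.2 ⟨hij, hj⟩, hx'.1⟩
  have hdis : Set.Pairwise (↑(Finset.range N)) (Function.onFun Disjoint B) := by
    intro i hi j hj hij
    have hi' : i < N := by simpa using hi
    have hj' : j < N := by simpa using hj
    rcases lt_or_gt_of_ne hij with h | h
    · exact hlt i hi' j hj' h
    · exact (hlt j hj' i hi' h).symm
  refine lower f B hB hdis _ _ ?_ ?_ a
  · intro k hk
    have h1 := hac k _ (hUmeas (k + 1)) (hUm (k + 1) N)
    have h2 := P_union (hB k) (hUmeas (k + 1)) (f k) Set.disjoint_sdiff_left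
    have h3 := P_mono (hA k) ((hB k).union (hUmeas (k + 1))) (f k)
      (by intro x hx; by_cases h : x ∈ ⋃ i ∈ Finset.Ico (k + 1) N, A i
          · exact Or.inr h
          · exact Or.inl ⟨hx, h⟩)
    have h4 := hAf k
    linarith
  · intro k hk
    rw [P_sum _ B hB hdis]
    have h3 := P_mono ((Finset.range N).measurableSet_biUnion fun i _ => hB i) (hUmeas 0) (f k)
      (by
        intro x hx
        simp only [Set.mem_iUnion] at hx ⊢
        obtain ⟨i, hi, hx⟩ := hx
        exact ⟨i, by simpa using hi, hx.1⟩)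
    have h5 : mu01.real (⋃ i ∈ Finset.Ico 0 N, A i) ≤ δ0 := by
      refine (hUm 0 N).trans ?_
      show 2 * (δ0 / 2) ≤ δ0
      linarith
    have h4 := H0 (f k) (hpZ _) (hp1 _) _ (hUmeas 0) h5
    linarith


lemma P_add {A B : Set ℝ} (hA : MeasurableSet A) (hB : MeasurableSet B) (h : L1)
    (hAB : Disjoint A B) : P (A ∪ B) (hA.union hB) h = P A hA h + P B hB h := by
  apply Lp.ext
  filter_upwards [P_coe (A ∪ B) (hA.union hB) h, P_coe A hA h, P_coe B hB h,
    Lp.coeFn_add (P A hA h) (P B hB h)] with x h1 h2 h3 h4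
  rw [h1, h4, Pi.add_apply, h2, h3, Set.indicator_union_of_disjoint hAB]

lemma P_P {A B : Set ℝ} (hA : MeasurableSet A) (hB : MeasurableSet B) (h : L1) :
    P A hA (P B hB h) = P (A ∩ B) (hA.inter hB) h := by
  apply Lp.ext
  filter_upwards [P_coe A hA (P B hB h), P_coe B hB h, P_coe (A ∩ B) (hA.inter hB) h]
    with x h1 h2 h3
  rw [h1, h3, ← Set.indicator_indicator]
  by_cases hx : x ∈ A
  · simp only [Set.indicator_of_mem hx, h2]
  · simp [hx]

lemma P_congr {A B : Set ℝ} (hA : MeasurableSet A) (hB : MeasurableSet B) (h : L1)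
    (hAB : A = B) : P A hA h = P B hB h := by
  subst hAB; rfl

lemma P_empty (h : L1) : P ∅ MeasurableSet.empty h = 0 := by
  rw [← norm_eq_zero, norm_P]; simp

lemma P_compl {A : Set ℝ} (hA : MeasurableSet A) (h : L1) :
    ‖h‖ = ‖P A hA h‖ + ‖P Aᶜ hA.compl h‖ := by
  rw [← P_union hA hA.compl h disjoint_compl_right,
    P_congr (hA.union hA.compl) MeasurableSet.univ h (Set.union_compl_self A), P_univ]

lemma P_Ico (h : L1) (d : ℝ) (hd : 0 ≤ d) (n : ℕ) :
    P (Set.Ico 0 (n * d)) measurableSet_Ico h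
      = ∑ i ∈ Finset.range n, P (Set.Ico (i * d) ((i + 1) * d)) measurableSet_Ico h := by
  induction n with
  | zero =>
    rw [P_congr measurableSet_Ico MeasurableSet.empty h (by simp), P_empty]; simp
  | succ n ih =>
    rw [Finset.sum_range_succ, ← ih, ← P_add]
    · apply P_congr
      rw [Set.Ico_union_Ico_eq_Ico] 
      · push_cast; rfl
      · positivity
      · nlinarith
    · rw [Set.disjoint_left]
      intro x hx hx'
      exact absurd hx.2 (not_lt.2 hx'.1)

lemma P_Ico_two (h : L1) : P (Set.Ico 0 2) measurableSet_Ico h = h := by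
  apply Lp.ext
  have h01 : ∀ᵐ x ∂mu01, x ∈ Set.Icc (0 : ℝ) 1 := by
    unfold mu01; exact ae_restrict_mem measurableSet_Icc
  filter_upwards [P_coe (Set.Ico 0 2) measurableSet_Ico h, h01] with x hx hx'
  rw [hx, Set.indicator_of_mem]
  exact ⟨hx'.1, by linarith [hx'.2]⟩

lemma mu_Ico (a b : ℝ) (hab : a ≤ b) : mu01.real (Set.Ico a b) ≤ b - a := by
  have h : mu01 (Set.Ico a b) ≤ volume (Set.Ico a b) := Measure.restrict_apply_le _ _
  rw [Real.volume_Ico] at h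
  exact ENNReal.toReal_le_of_le_ofReal (by linarith) h

lemma exists_ne : ∃ h : L1, h ≠ 0 := by
  refine ⟨indicatorConstLp 1 MeasurableSet.univ (measure_ne_top mu01 _) (1 : ℝ), ?_⟩
  rw [← norm_ne_zero_iff, norm_indicatorConstLp one_ne_zero ENNReal.one_ne_top]
  simp [mu01, Measure.real]

lemma exists_supported (Z : Submodule ℝ L1) (f : L1 ⧸ Z →L[ℝ] ℝ) {ε δ : ℝ} (hε : 0 < ε)
    (hδ : 0 < δ) : ∃ A, ∃ hA : MeasurableSet A, ∃ y : L1, mu01.real A ≤ δ ∧ ‖y‖ = 1 ∧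
      P A hA y = y ∧ ‖f‖ - ε ≤ f (Submodule.Quotient.mk y) := by
  by_contra hcon
  push Not at hcon
  set G : L1 →ₗ[ℝ] ℝ := f.toLinearMap ∘ₗ Z.mkQ with hG
  have hGf : ∀ y, G y = f (Submodule.Quotient.mk y) := fun _ => rfl
  have h1 : ∀ A (hA : MeasurableSet A), mu01.real A ≤ δ → ∀ y : L1,
      G (P A hA y) ≤ (‖f‖ - ε) * ‖P A hA y‖ := by
    intro A hA hm y
    by_cases h0 : P A hA y = 0
    · rw [h0]; simp
    set w := P A hA y with hw
    have hwn : 0 < ‖w‖ := norm_pos_iff.2 h0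
    have hPw : P A hA w = w := by
      rw [hw, P_P]; exact P_congr _ _ _ (Set.inter_self A)
    have := hcon A hA (‖w‖⁻¹ • w) hm
      (by rw [norm_smul, norm_inv, norm_norm, inv_mul_cancel₀ hwn.ne'])
      (by rw [map_smul, hPw])
    rw [← hGf, map_smul, smul_eq_mul, inv_mul_lt_iff₀ hwn] at this
    linarith
  obtain ⟨n, hn⟩ := exists_nat_gt (2 / δ)
  have hn0 : (0 : ℝ) < n := lt_trans (by positivity) hn
  have h2 : ∀ h : L1, G h ≤ (‖f‖ - ε) * ‖h‖ := by
    intro h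
    have hd : (0 : ℝ) ≤ 2 / n := by positivity
    have e := P_Ico h (2 / n) hd n
    rw [P_congr measurableSet_Ico measurableSet_Ico h
      (show Set.Ico (0 : ℝ) (n * (2 / n)) = Set.Ico 0 2 by rw [mul_div_cancel₀ _ hn0.ne']),
      P_Ico_two] at e
    have hdis : Set.Pairwise (↑(Finset.range n)) (Function.onFun Disjoint
        fun i : ℕ => Set.Ico ((i : ℝ) * (2 / n)) ((i + 1) * (2 / n))) := by
      have hlt : ∀ i j : ℕ, i < j → Disjoint (Set.Ico ((i : ℝ) * (2 / n)) ((i + 1) * (2 / n)))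
          (Set.Ico ((j : ℝ) * (2 / n)) ((j + 1) * (2 / n))) := by
        intro i j hij
        rw [Set.disjoint_left]
        intro x hx hx'
        have : ((i : ℝ) + 1) ≤ j := by exact_mod_cast hij
        have := mul_le_mul_of_nonneg_right this hd
        linarith [hx.2, hx'.1]
      intro i _ j _ hij
      rcases lt_or_gt_of_ne hij with h | h
      · exact hlt i j h
      · exact (hlt j i h).symm
    have hsum := P_sum (Finset.range n) (fun i : ℕ => Set.Ico ((i : ℝ) * (2 / n)) ((i + 1) * (2 / n)))
      (fun i => measurableSet_Ico) hdis h
    have hle : ∑ i ∈ Finset.range n, ‖P (Set.Ico ((i : ℝ) * (2 / n)) ((i + 1) * (2 / n)))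
        measurableSet_Ico h‖ ≤ ‖h‖ := by
      rw [hsum]; exact P_le _ _ _
    have hge : ‖h‖ ≤ ∑ i ∈ Finset.range n, ‖P (Set.Ico ((i : ℝ) * (2 / n)) ((i + 1) * (2 / n)))
        measurableSet_Ico h‖ := by
      conv_lhs => rw [e]
      exact norm_sum_le _ _
    have heq := le_antisymm hle hge
    rw [← heq, Finset.mul_sum]
    conv_lhs => rw [e]
    rw [map_sum]
    refine Finset.sum_le_sum fun i _ => h1 _ _ ?_ h
    have hle : (i : ℝ) * (2 / n) ≤ (i + 1) * (2 / n) := by nlinarith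
    refine (mu_Ico _ _ hle).trans ?_
    have : 2 / (n : ℝ) ≤ δ := by
      rw [div_le_iff₀ hn0]
      rw [div_lt_iff₀ hδ] at hn
      linarith
    linarith
  have h3 : ∀ h : L1, |G h| ≤ (‖f‖ - ε) * ‖h‖ := by
    intro h
    have := h2 (-h)
    rw [map_neg, norm_neg] at this
    exact abs_le.2 ⟨by linarith, h2 h⟩
  obtain ⟨h0, hh0⟩ := exists_ne
  have h4 : 0 ≤ ‖f‖ - ε := by
    have := (abs_nonneg _).trans (h3 h0)
    exact nonneg_of_mul_nonneg_left this (norm_pos_iff.2 hh0)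
  have h5 : ‖f‖ ≤ ‖f‖ - ε := by
    refine f.opNorm_le_bound h4 fun u => ?_
    refine le_of_forall_pos_le_add fun e he => ?_
    obtain ⟨m, hm, hlt⟩ := Submodule.Quotient.norm_mk_lt u
      (show 0 < e / (‖f‖ - ε + 1) by positivity)
    have := h3 m
    rw [hGf, hm] at this
    rw [Real.norm_eq_abs]
    refine this.trans ?_
    have h6 := mul_le_mul_of_nonneg_left hlt.le h4
    have h7 : (‖f‖ - ε) * (e / (‖f‖ - ε + 1)) ≤ e := by
      rw [← mul_div_assoc, div_le_iff₀ (by positivity)]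
      nlinarith
    rw [mul_add] at h6
    linarith
  linarith

lemma daugavet_of_ei (Z : Submodule ℝ L1) (hE : EI Z) : DaugavetProperty (L1 ⧸ Z) := by
  intro f x
  apply le_antisymm
  · refine (norm_add_le _ _).trans ?_
    gcongr
    exact ContinuousLinearMap.norm_id_le
  rw [ContinuousLinearMap.norm_smulRight_apply]
  set K := ‖ContinuousLinearMap.id ℝ (L1 ⧸ Z) + f.smulRight x‖ with hK
  have hK0 : 0 ≤ K := by rw [hK]; apply ContinuousLinearMap.opNorm_nonneg
  obtain ⟨x0, rfl⟩ := Submodule.Quotient.mk_surjective Z x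
  set q : L1 →ₗ[ℝ] L1 ⧸ Z := Z.mkQ with hq
  have hqm : ∀ y, (Submodule.Quotient.mk y : L1 ⧸ Z) = q y := fun _ => rfl
  rw [hqm] at hK ⊢
  have hqn : ∀ y, ‖q y‖ ≤ ‖y‖ := fun y => Submodule.Quotient.norm_mk_le Z y
  have main : ∀ ε > 0, 1 + ‖f‖ * ‖q x0‖ ≤ K + (5 + ‖q x0‖) * ε := by
    intro ε hε
    set M := 2 * (1 + ‖f‖ * ‖x0‖) with hM
    have hM0 : 0 < M := by positivity
    obtain ⟨δ1, hδ1, H1⟩ := hE (ε / M) (by positivity)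
    obtain ⟨δ2, hδ2, H2⟩ := P_ac x0 (show 0 < ε / (‖f‖ + 1) by positivity)
    obtain ⟨A, hA, y, hm, hy1, hPy, hfy⟩ := exists_supported Z f hε (lt_min hδ1 hδ2)
    rw [hqm] at hfy
    set t := f (q y) with ht
    have htf : |t| ≤ ‖f‖ := by
      have := f.le_opNorm (q y)
      have h1 := hqn y
      rw [hy1] at h1
      refine this.trans (mul_le_of_le_one_right (norm_nonneg _) h1)
    have hup : ‖q (y + t • x0)‖ ≤ K := by
      have h1 := (ContinuousLinearMap.id ℝ (L1 ⧸ Z) + f.smulRight (q x0)).le_opNorm (q y)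
      have h2 : (ContinuousLinearMap.id ℝ (L1 ⧸ Z) + f.smulRight (q x0)) (q y)
          = q (y + t • x0) := by
        rw [map_add, map_smul]; rfl
      rw [h2, ← hK] at h1
      have h3 := hqn y
      rw [hy1] at h3
      exact h1.trans (mul_le_of_le_one_right hK0 h3)
    have hrep : ∀ z ∈ Z, 1 + |t| * ‖q x0‖ - 4 * ε ≤ ‖y + (t • x0 + z)‖ := by
      intro z hz
      have hqx : |t| * ‖q x0‖ ≤ ‖t • x0 + z‖ := by
        have h1 := hqn (t • x0 + z)
        have h2 : q z = 0 := (Submodule.Quotient.mk_eq_zero Z).2 hz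
        rw [map_add, h2, add_zero, map_smul, norm_smul, Real.norm_eq_abs] at h1
        exact h1
      by_cases hzM : ‖z‖ ≤ M
      · have hPz : ‖P A hA z‖ ≤ ε := by
          have h1 := H1 (M⁻¹ • z) (Z.smul_mem _ hz) (by
            rw [norm_smul, norm_inv, Real.norm_eq_abs, abs_of_pos hM0, inv_mul_le_iff₀ hM0]
            linarith) A hA (hm.trans (min_le_left _ _))
          rw [map_smul, norm_smul, norm_inv, Real.norm_eq_abs, abs_of_pos hM0,
            inv_mul_le_iff₀ hM0, mul_div_cancel₀ _ hM0.ne'] at h1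
          exact h1
        have hPx : ‖P A hA (t • x0)‖ ≤ ε := by
          have h1 := H2 A hA (hm.trans (min_le_right _ _))
          rw [map_smul, norm_smul, Real.norm_eq_abs]
          rw [le_div_iff₀ (by positivity)] at h1
          have := norm_nonneg (P A hA x0)
          nlinarith
        set w := t • x0 + z with hw
        have hPw : ‖P A hA w‖ ≤ 2 * ε := by
          rw [hw, map_add]
          linarith [norm_add_le (P A hA (t • x0)) (P A hA z)]
        have h1 := P_compl hA (y + w)
        have h2 := P_compl hA w
        have h3 : P Aᶜ hA.compl y = 0 := by
          rw [← hPy, P_P, P_congr _ MeasurableSet.empty y (Set.compl_inter_self A), P_empty]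
        rw [(P A hA).map_add y w, (P Aᶜ hA.compl).map_add y w, hPy, h3, zero_add] at h1
        have h4 := norm_sub_le (y + P A hA w) (P A hA w)
        rw [add_sub_cancel_right, hy1] at h4
        linarith
      · push Not at hzM
        have h1 := norm_sub_le (y + (t • x0 + z)) (y + t • x0)
        rw [show y + (t • x0 + z) - (y + t • x0) = z by abel] at h1
        have h2 := norm_add_le y (t • x0)
        rw [hy1, norm_smul, Real.norm_eq_abs] at h2
        have h3 : |t| * ‖x0‖ ≤ ‖f‖ * ‖x0‖ := by gcongr
        have h4 : |t| * ‖q x0‖ ≤ |t| * ‖x0‖ := by gcongr; exact hqn _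
        linarith
    have hlow : 1 + |t| * ‖q x0‖ - 4 * ε ≤ ‖q (y + t • x0)‖ := by
      refine le_of_forall_pos_le_add fun e he => ?_
      obtain ⟨m, hm, hlt⟩ := Submodule.Quotient.norm_mk_lt (q (y + t • x0)) he
      have hz : m - (y + t • x0) ∈ Z := (Submodule.Quotient.eq Z).1 hm
      have := hrep _ hz
      rw [show y + (t • x0 + (m - (y + t • x0))) = m by abel] at this
      linarith
    have h1 : (‖f‖ - ε) * ‖q x0‖ ≤ |t| * ‖q x0‖ :=
      mul_le_mul_of_nonneg_right (hfy.trans (le_abs_self t)) (norm_nonneg _)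
    nlinarith
  refine le_of_forall_pos_le_add fun e he => ?_
  have h1 := main (e / (5 + ‖q x0‖)) (by positivity)
  rwa [mul_div_cancel₀ _ (by positivity)] at h1


/-- A finitely additive, absolutely continuous set function has a density. -/
lemma density (m : Set ℝ → ℝ)
    (hadd : ∀ A B, MeasurableSet A → MeasurableSet B → Disjoint A B → m (A ∪ B) = m A + m B)
    (hac : ∀ ε > 0, ∃ δ > 0, ∀ A, MeasurableSet A → mu01.real A ≤ δ → |m A| ≤ ε) :
    ∃ g : ℝ → ℝ, Integrable g mu01 ∧ ∀ A, MeasurableSet A → m A = ∫ x in A, g x ∂mu01 := by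
  classical
  have hempty : m ∅ = 0 := by
    have := hadd ∅ ∅ MeasurableSet.empty MeasurableSet.empty (by simp)
    rw [Set.union_empty] at this
    linarith
  have hfin : ∀ (A : ℕ → Set ℝ) (s : Finset ℕ), (∀ i, MeasurableSet (A i)) →
      Pairwise (Function.onFun Disjoint A) → m (⋃ i ∈ s, A i) = ∑ i ∈ s, m (A i) := by
    intro A s hA hd
    induction s using Finset.induction_on with
    | empty => simpa using hempty
    | insert i s hi ih =>
      rw [Finset.sum_insert hi, Finset.set_biUnion_insert, hadd _ _ (hA i)
        (s.measurableSet_biUnion fun i _ => hA i), ih]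
      rw [Set.disjoint_iUnion₂_right]
      intro j hj
      exact hd (by rintro rfl; exact hi hj)
  let ν : SignedMeasure ℝ :=
    { measureOf' := fun A => if MeasurableSet A then m A else 0
      empty' := by simp [hempty]
      not_measurable' := fun A hA => by simp [hA]
      m_iUnion' := by
        intro A hA hd
        have hU : MeasurableSet (⋃ i, A i) := MeasurableSet.iUnion hA
        simp only [hA, hU, if_true]
        have hμ : HasSum (fun i => mu01.real (A i)) (mu01.real (⋃ i, A i)) := by
          have h1 : mu01 (⋃ i, A i) = ∑' i, mu01 (A i) := measure_iUnion hd hA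
          unfold Measure.real
          rw [h1, ENNReal.tsum_toReal_eq (fun i => measure_ne_top _ _)]
          apply Summable.hasSum
          apply ENNReal.summable_toReal
          rw [← h1]
          exact measure_ne_top _ _
        rw [HasSum, Metric.tendsto_nhds]
        intro ε hε
        obtain ⟨δ, hδ, H⟩ := hac (ε / 2) (by positivity)
        have := (Metric.tendsto_nhds.1 hμ) δ hδ
        filter_upwards [this] with s hs
        have hsU : MeasurableSet (⋃ i ∈ s, A i) := s.measurableSet_biUnion fun i _ => hA i
        have hsub : (⋃ i ∈ s, A i) ⊆ ⋃ i, A i := Set.iUnion₂_subset_iUnion _ _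
        have e1 : m (⋃ i, A i) = m ((⋃ i, A i) \ ⋃ i ∈ s, A i) + ∑ i ∈ s, m (A i) := by
          rw [← hfin A s hA hd, ← hadd _ _ (hU.diff hsU) hsU Set.disjoint_sdiff_left,
            Set.sdiff_union_of_subset hsub]
        have e2 : mu01.real ((⋃ i, A i) \ ⋃ i ∈ s, A i)
            = mu01.real (⋃ i, A i) - ∑ i ∈ s, mu01.real (A i) := by
          rw [measureReal_sdiff hsub hsU, measureReal_biUnion_finset (fun i _ j _ h => hd h)
            (fun i _ => hA i)]
        have e3 := H _ (hU.diff hsU) (by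
          rw [e2]
          rw [Real.dist_eq, abs_lt] at hs
          linarith [hs.1])
        rw [Real.dist_eq, e1]
        rw [abs_sub_comm, add_sub_cancel_right]
        linarith }
  have hν : ∀ A, MeasurableSet A → ν A = m A := fun A hA => if_pos hA
  have hνac : ν ≪ᵥ mu01.toENNRealVectorMeasure := by
    apply VectorMeasure.AbsolutelyContinuous.mk
    intro A hA h0
    rw [Measure.toENNRealVectorMeasure_apply_measurable hA] at h0
    rw [hν A hA]
    have h1 : |m A| ≤ 0 := by
      refine le_of_forall_pos_le_add fun ε hε => ?_
      obtain ⟨δ, hδ, H⟩ := hac ε hε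
      rw [zero_add]
      exact H A hA (by simp [Measure.real, h0, hδ.le])
    exact abs_eq_zero.1 (le_antisymm h1 (abs_nonneg _))
  have hd := (SignedMeasure.absolutelyContinuous_iff_withDensityᵥ_rnDeriv_eq ν mu01).1 hνac
  have hi : Integrable (ν.rnDeriv mu01) mu01 := SignedMeasure.integrable_rnDeriv _ _
  refine ⟨ν.rnDeriv mu01, hi, fun A hA => ?_⟩
  rw [← withDensityᵥ_apply hi hA, hd, hν A hA]

/-- The functional `h ↦ ∫_A h`. -/
noncomputable def phi (A : Set ℝ) : L1 →L[ℝ] ℝ :=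
  LinearMap.mkContinuous
    { toFun := fun h => ∫ x in A, h x ∂mu01
      map_add' := by
        intro f g
        rw [← integral_add (L1.integrable_coeFn f).integrableOn
          (L1.integrable_coeFn g).integrableOn]
        exact integral_congr_ae (ae_restrict_of_ae (Lp.coeFn_add f g))
      map_smul' := by
        intro c f
        rw [RingHom.id_apply, ← integral_smul]
        exact integral_congr_ae (ae_restrict_of_ae (Lp.coeFn_smul c f)) } 1 (by
    intro h
    rw [one_mul, L1.norm_eq_integral_norm]
    exact (norm_integral_le_integral_norm _).trans
      (setIntegral_le_integral (L1.integrable_coeFn h).norm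
        (Filter.Eventually.of_forall fun x => norm_nonneg _)))

lemma phi_apply (A : Set ℝ) (h : L1) : phi A h = ∫ x in A, h x ∂mu01 := rfl

lemma phi_le (A : Set ℝ) (hA : MeasurableSet A) (h : L1) : |phi A h| ≤ ‖P A hA h‖ := by
  rw [phi_apply, norm_P, ← Real.norm_eq_abs]
  exact norm_integral_le_integral_norm _

lemma phi_add (A B : Set ℝ) (hB : MeasurableSet B) (hd : Disjoint A B) :
    phi (A ∪ B) = phi A + phi B := by
  ext h
  simp only [_root_.add_apply, phi_apply]
  exact setIntegral_union hd hB (L1.integrable_coeFn h).integrableOn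
    (L1.integrable_coeFn h).integrableOn

lemma count_floor (u : ℝ) (n : ℕ) :
    ∑ k ∈ Finset.range n, (if ((k : ℝ) + 1) ≤ u then (1 : ℝ) else 0) = (min n ⌊u⌋₊ : ℕ) := by
  induction n with
  | zero => simp
  | succ n ih =>
    rw [Finset.sum_range_succ, ih]
    have : ((n : ℝ) + 1 ≤ u) ↔ n + 1 ≤ ⌊u⌋₊ := by
      rw [Nat.le_floor_iff' (by omega)]; push_cast; rfl
    by_cases h : (n : ℝ) + 1 ≤ u
    · have h' := this.1 h
      rw [if_pos h, min_eq_left (by omega), min_eq_left (by omega)]; push_cast; rfl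
    · have h' : ¬ (n + 1 ≤ ⌊u⌋₊) := fun h2 => h (this.2 h2)
      rw [if_neg h, min_eq_right (by omega), min_eq_right (by omega)]; simp

lemma count_approx (t : ℝ) (h0 : 0 ≤ t) (h1 : t ≤ 1) (n : ℕ) (hn : 0 < n) :
    |t - (n : ℝ)⁻¹ * ∑ k ∈ Finset.range n, (if ((k : ℝ) + 1) ≤ n * t then (1 : ℝ) else 0)|
      ≤ (n : ℝ)⁻¹ := by
  have hn' : (0 : ℝ) < n := by exact_mod_cast hn
  have hle : ⌊(n : ℝ) * t⌋₊ ≤ n := Nat.floor_le_of_le (by nlinarith)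
  rw [count_floor, min_eq_right hle]
  have a1 : (⌊(n : ℝ) * t⌋₊ : ℝ) ≤ n * t := Nat.floor_le (by positivity)
  have a2 : (n : ℝ) * t < ⌊(n : ℝ) * t⌋₊ + 1 := Nat.lt_floor_add_one _
  have e : t - (n : ℝ)⁻¹ * ⌊(n : ℝ) * t⌋₊ = (n : ℝ)⁻¹ * (n * t - ⌊(n : ℝ) * t⌋₊) := by
    field_simp
  rw [e, abs_mul, abs_of_pos (inv_pos.2 hn')]
  refine mul_le_of_le_one_right (by positivity) ?_
  rw [abs_le]; constructor <;> linarith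

/-- Representation of functionals on `L¹`. -/
lemma dual_rep (ψ : L1 →L[ℝ] ℝ) : ∃ g : ℝ → ℝ, ∃ C > 0, Measurable g ∧ (∀ x, |g x| ≤ C) ∧
    ∀ h : L1, ψ h = ∫ x, g x * h x ∂mu01 := by
  classical
  let ind : (A : Set ℝ) → MeasurableSet A → L1 := fun A hA =>
    indicatorConstLp 1 hA (measure_ne_top mu01 _) (1 : ℝ)
  let m : Set ℝ → ℝ := fun A => if hA : MeasurableSet A then ψ (ind A hA) else 0
  have hm : ∀ A (hA : MeasurableSet A), m A = ψ (ind A hA) := fun A hA => dif_pos hA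
  have hmle : ∀ A, MeasurableSet A → |m A| ≤ ‖ψ‖ * mu01.real A := by
    intro A hA
    rw [hm A hA]
    refine (ψ.le_opNorm _).trans (le_of_eq ?_)
    rw [norm_indicatorConstLp one_ne_zero ENNReal.one_ne_top]
    simp
  obtain ⟨g, hg, hgm⟩ := density m (by
      intro A B hA hB hd
      rw [hm A hA, hm B hB, hm _ (hA.union hB), ← map_add]
      congr 1
      exact indicatorConstLp_disjoint_union hA hB _ _ hd 1)
    (by
      intro ε hε
      refine ⟨ε / (‖ψ‖ + 1), by positivity, fun A hA h => (hmle A hA).trans ?_⟩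
      rw [le_div_iff₀ (by positivity)] at h
      have : 0 ≤ mu01.real A := measureReal_nonneg
      nlinarith)
  set C := ‖ψ‖ + 1 with hC
  have hC0 : 0 < C := by positivity
  have hub : ∀ᵐ x ∂mu01, g x ≤ C := by
    have := ae_le_of_forall_setIntegral_le (μ := mu01) (f := g) (g := fun _ => C) hg
      (integrable_const C) (fun s hs _ => by
        rw [← hgm s hs, setIntegral_const, smul_eq_mul]
        have h1 := (le_abs_self _).trans (hmle s hs)
        have : 0 ≤ mu01.real s := measureReal_nonneg
        nlinarith)
    exact this
  have hlb : ∀ᵐ x ∂mu01, -C ≤ g x := by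
    have := ae_le_of_forall_setIntegral_le (μ := mu01) (f := fun _ => -C) (g := g)
      (integrable_const (-C)) hg (fun s hs _ => by
        rw [← hgm s hs, setIntegral_const, smul_eq_mul]
        have h1 := (neg_abs_le _).trans' (neg_le_neg (hmle s hs))
        have : 0 ≤ mu01.real s := measureReal_nonneg
        nlinarith)
    exact this
  let g1 : ℝ → ℝ := fun x => max (-C) (min C (hg.1.mk g x))
  have hg1m : Measurable g1 :=
    measurable_const.max (measurable_const.min hg.1.stronglyMeasurable_mk.measurable)
  have hg1b : ∀ x, |g1 x| ≤ C := fun x =>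
    abs_le.2 ⟨le_max_left _ _, max_le (by linarith) (min_le_left _ _)⟩
  have hg1 : g =ᵐ[mu01] g1 := by
    filter_upwards [hub, hlb, hg.1.ae_eq_mk] with x h1 h2 h3
    show g x = max (-C) (min C (hg.1.mk g x))
    rw [← h3, min_eq_right h1, max_eq_right h2]
  refine ⟨g1, C, hC0, hg1m, hg1b, ?_⟩
  have hprodint : ∀ h : L1, Integrable (fun x => g1 x * h x) mu01 := fun h =>
    (L1.integrable_coeFn h).bdd_mul hg1m.aestronglyMeasurable
      (Filter.Eventually.of_forall hg1b)
  let Ψ : L1 →L[ℝ] ℝ := LinearMap.mkContinuous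
    { toFun := fun h => ∫ x, g1 x * h x ∂mu01
      map_add' := by
        intro f h
        rw [← integral_add (hprodint f) (hprodint h)]
        apply integral_congr_ae
        filter_upwards [Lp.coeFn_add f h] with x hx
        rw [hx, Pi.add_apply, mul_add]
      map_smul' := by
        intro c f
        rw [RingHom.id_apply, ← integral_smul]
        apply integral_congr_ae
        filter_upwards [Lp.coeFn_smul c f] with x hx
        rw [hx, Pi.smul_apply, smul_eq_mul, smul_eq_mul]; ring } C (by
    intro h
    rw [L1.norm_eq_integral_norm, ← integral_const_mul]
    refine (norm_integral_le_integral_norm _).trans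
      (integral_mono (hprodint h).norm ((L1.integrable_coeFn h).norm.const_mul C) fun x => ?_)
    simp only [norm_mul]
    exact mul_le_mul_of_nonneg_right (hg1b x) (norm_nonneg _))
  have hΨ : ∀ h, Ψ h = ∫ x, g1 x * h x ∂mu01 := fun _ => rfl
  have hind : ∀ A (hA : MeasurableSet A), Ψ (ind A hA) = ψ (ind A hA) := by
    intro A hA
    rw [hΨ, ← hm A hA, hgm A hA, ← integral_indicator hA]
    apply integral_congr_ae
    filter_upwards [hg1, (indicatorConstLp_coeFn : ind A hA =ᵐ[mu01] _)] with x h1 h2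
    rw [h2]
    by_cases hx : x ∈ A <;> simp [hx, h1]
  intro h
  rw [← hΨ]
  refine Lp.induction ENNReal.one_ne_top (motive := fun h : L1 => ψ h = Ψ h) ?_ ?_ ?_ h
  · intro c s hs hμ
    have : (Lp.simpleFunc.indicatorConst 1 hs hμ.ne c : L1) = c • ind s hs := by
      rw [Lp.simpleFunc.coe_indicatorConst]
      apply Lp.ext
      filter_upwards [(indicatorConstLp_coeFn : indicatorConstLp 1 hs hμ.ne c =ᵐ[mu01] _),
        (indicatorConstLp_coeFn : ind s hs =ᵐ[mu01] _), Lp.coeFn_smul c (ind s hs)]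
        with x h1 h2 h3
      rw [h1, h3, Pi.smul_apply, h2]
      by_cases hx : x ∈ s <;> simp [hx]
    rw [this, map_smul, map_smul, hind]
  · intro f g hf hg _ h1 h2
    rw [map_add, map_add, h1, h2]
  · exact isClosed_eq ψ.continuous Ψ.continuous

lemma rep (G : (L1 →L[ℝ] ℝ) →L[ℝ] ℝ)
    (hG : ∀ ε > 0, ∃ δ > 0, ∀ A, MeasurableSet A → mu01.real A ≤ δ → |G (phi A)| ≤ ε) :
    ∃ z0 : L1, ∀ ψ, G ψ = ψ z0 := by
  obtain ⟨g0, hg0, hgm⟩ := density (fun A => G (phi A)) (by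
    intro A B _ hB hd
    rw [phi_add A B hB hd, map_add]) hG
  let z0 : L1 := hg0.toL1 g0
  have hz0 : z0 =ᵐ[mu01] g0 := Integrable.coeFn_toL1 hg0
  have hphi : ∀ A, MeasurableSet A → G (phi A) = phi A z0 := by
    intro A hA
    rw [phi_apply, hgm A hA]
    exact integral_congr_ae (ae_restrict_of_ae hz0.symm)
  refine ⟨z0, fun ψ => ?_⟩
  obtain ⟨g, C, hC, hgmeas, hgb, hψ⟩ := dual_rep ψ
  let t : ℝ → ℝ := fun x => (g x + C) / (2 * C)
  have ht0 : ∀ x, 0 ≤ t x := fun x => div_nonneg (by linarith [(abs_le.1 (hgb x)).1]) (by linarith)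
  have ht1 : ∀ x, t x ≤ 1 := fun x => by
    show (g x + C) / (2 * C) ≤ 1
    rw [div_le_one (by linarith)]; linarith [(abs_le.1 (hgb x)).2]
  have htm : Measurable t := (hgmeas.add_const C).div_const _
  let A : ℕ → ℕ → Set ℝ := fun n k => {x | (k : ℝ) + 1 ≤ n * t x}
  have hA : ∀ n k, MeasurableSet (A n k) := fun n k =>
    measurableSet_le measurable_const (htm.const_mul _)
  let ψn : ℕ → (L1 →L[ℝ] ℝ) := fun n =>
    (2 * C) • ((n : ℝ)⁻¹ • ∑ k ∈ Finset.range n, phi (A n k)) - C • phi Set.univ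
  have hψn : ∀ n, G (ψn n) = ψn n z0 := by
    intro n
    simp only [ψn, map_sub, map_smul, map_sum, _root_.sub_apply,
      _root_.smul_apply, _root_.sum_apply]
    rw [hphi _ MeasurableSet.univ, Finset.sum_congr rfl fun k _ => hphi _ (hA n k)]
  have hdist : ∀ n : ℕ, 0 < n → ‖ψ - ψn n‖ ≤ 2 * C * (n : ℝ)⁻¹ := by
    intro n hn
    have hn' : (0 : ℝ) < n := by exact_mod_cast hn
    refine ContinuousLinearMap.opNorm_le_bound _ (by positivity) fun h => ?_
    have hi := L1.integrable_coeFn h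
    let s : ℝ → ℝ := fun x => (n : ℝ)⁻¹ * ∑ k ∈ Finset.range n,
      (if ((k : ℝ) + 1) ≤ n * t x then (1 : ℝ) else 0)
    have hsi : ∀ k, Integrable ((A n k).indicator h) mu01 := fun k => hi.indicator (hA n k)
    have e1 : ψn n h = ∫ x, (2 * C * s x - C) * h x ∂mu01 := by
      simp only [ψn, _root_.sub_apply, _root_.smul_apply,
        _root_.sum_apply, phi_apply, smul_eq_mul]
      rw [Finset.sum_congr rfl fun k _ => (integral_indicator (hA n k)).symm,
        ← integral_finsetSum _ (fun k _ => hsi k), ← integral_const_mul, ← integral_const_mul,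
        setIntegral_univ, ← integral_const_mul, ← integral_sub]
      · apply integral_congr_ae
        refine Filter.Eventually.of_forall fun x => ?_
        have : ∀ k, (A n k).indicator h x
            = (if ((k : ℝ) + 1) ≤ n * t x then (1 : ℝ) else 0) * h x := by
          intro k
          by_cases hx : ((k : ℝ) + 1) ≤ n * t x
          · rw [Set.indicator_of_mem (show x ∈ A n k from hx), if_pos hx, one_mul]
          · rw [Set.indicator_of_notMem (show x ∉ A n k from hx), if_neg hx, zero_mul]
        simp only [s]
        rw [Finset.sum_congr rfl fun k _ => this k, ← Finset.sum_mul]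
        ring
      · exact ((integrable_finsetSum _ fun k _ => hsi k).const_mul _).const_mul _
      · exact hi.const_mul _
    have hgi : Integrable (fun x => g x * h x) mu01 :=
      hi.bdd_mul hgmeas.aestronglyMeasurable (Filter.Eventually.of_forall hgb)
    have hsm : Measurable s :=
      (Finset.measurable_sum _ fun k _ =>
        Measurable.ite (hA n k) measurable_const measurable_const).const_mul _
    have hpt : ∀ x, |g x - (2 * C * s x - C)| ≤ 2 * C * (n : ℝ)⁻¹ := by
      intro x
      have h1 := count_approx (t x) (ht0 x) (ht1 x) n hn
      have h2 : g x - (2 * C * s x - C) = 2 * C * (t x - s x) := by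
        have : 2 * C * t x = g x + C := mul_div_cancel₀ _ (by positivity)
        rw [mul_sub, this]; ring
      rw [h2, abs_mul, abs_of_pos (by positivity : 0 < 2 * C)]
      exact mul_le_mul_of_nonneg_left h1 (by positivity)
    have hdi : Integrable (fun x => (g x - (2 * C * s x - C)) * h x) mu01 :=
      hi.bdd_mul (hgmeas.sub ((hsm.const_mul _).sub_const _)).aestronglyMeasurable
        (Filter.Eventually.of_forall hpt)
    have hsi' : Integrable (fun x => (2 * C * s x - C) * h x) mu01 := by
      have := hgi.sub hdi
      refine this.congr (Filter.Eventually.of_forall fun x => ?_)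
      simp only [Pi.sub_apply]; ring
    rw [_root_.sub_apply, hψ, e1, ← integral_sub hgi hsi', L1.norm_eq_integral_norm,
      ← integral_const_mul]
    refine (norm_integral_le_integral_norm _).trans
      (integral_mono (hgi.sub hsi').norm (hi.norm.const_mul _) fun x => ?_)
    simp only [Pi.sub_apply]
    rw [← sub_mul, norm_mul]
    exact mul_le_mul_of_nonneg_right (hpt x) (norm_nonneg _)
  have hlim : Filter.Tendsto ψn Filter.atTop (nhds ψ) := by
    rw [tendsto_iff_norm_sub_tendsto_zero]
    have h0 : Filter.Tendsto (fun n : ℕ => 2 * C * (n : ℝ)⁻¹) Filter.atTop (nhds 0) := by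
      simpa using (tendsto_inv_atTop_nhds_zero_nat (𝕜 := ℝ)).const_mul (2 * C)
    refine squeeze_zero' (Filter.Eventually.of_forall fun n => norm_nonneg _) ?_ h0
    filter_upwards [Filter.eventually_gt_atTop 0] with n hn
    rw [norm_sub_rev]; exact hdist n hn
  have l1 : Filter.Tendsto (fun n => G (ψn n)) Filter.atTop (nhds (G ψ)) :=
    (G.continuous.tendsto ψ).comp hlim
  have l2 : Filter.Tendsto (fun n => ψn n z0) Filter.atTop (nhds (ψ z0)) :=
    ((ContinuousLinearMap.apply ℝ ℝ z0).continuous.tendsto ψ).comp hlim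
  exact tendsto_nhds_unique l1 (by simpa only [hψn] using l2)

lemma reflexive_abs {E : Type*} [SeminormedAddCommGroup E] [NormedSpace ℝ E] (i : E →L[ℝ] L1)
    (hEI : ∀ ε > 0, ∃ δ > 0, ∀ z : E, ‖z‖ = 1 → ∀ A (hA : MeasurableSet A),
      mu01.real A ≤ δ → ‖P A hA (i z)‖ ≤ ε)
    (hext : ∀ χ : E →L[ℝ] ℝ, ∃ ψ : L1 →L[ℝ] ℝ, ∀ z, ψ (i z) = χ z)
    (hmem : ∀ z0 : L1, (∀ ψ : L1 →L[ℝ] ℝ, (∀ z, ψ (i z) = 0) → ψ z0 = 0) → ∃ z, i z = z0) :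
    Function.Surjective (NormedSpace.inclusionInDoubleDual ℝ E) := by
  intro F
  let R : (L1 →L[ℝ] ℝ) →L[ℝ] (E →L[ℝ] ℝ) :=
    ContinuousLinearMap.precomp ℝ i
  have hR : ∀ ψ (z : E), R ψ z = ψ (i z) := fun _ _ => rfl
  obtain ⟨z0, hz0⟩ := rep (F.comp R) (by
    intro ε hε
    obtain ⟨δ, hδ, H⟩ := hEI (ε / (‖F‖ + 1)) (by positivity)
    refine ⟨δ, hδ, fun A hA hm => ?_⟩
    have h1 : ‖R (phi A)‖ ≤ ε / (‖F‖ + 1) := by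
      refine ContinuousLinearMap.opNorm_le_of_unit_norm (by positivity) fun z hz => ?_
      rw [hR]
      exact (phi_le A hA (i z)).trans (H z hz A hA hm)
    have h2 := F.le_opNorm (R (phi A))
    rw [le_div_iff₀ (by positivity)] at h1
    rw [Real.norm_eq_abs] at h2
    have := norm_nonneg (R (phi A))
    exact h2.trans (by nlinarith))
  have hFR : ∀ ψ, F (R ψ) = ψ z0 := hz0
  obtain ⟨z, hz⟩ := hmem z0 (by
    intro ψ hψ
    have h0 : R ψ = 0 := by ext z; rw [hR, hψ]; rfl
    rw [← hFR, h0, map_zero])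
  refine ⟨z, ?_⟩
  ext χ
  obtain ⟨ψ, hψ⟩ := hext χ
  have : R ψ = χ := by ext z; rw [hR]; exact hψ z
  rw [NormedSpace.dual_def, ← this, hFR, hR, hz]

lemma ext_abs {V : Type*} [NormedAddCommGroup V] [NormedSpace ℝ V] (Z : Submodule ℝ V)
    (χ : Z →L[ℝ] ℝ) : ∃ ψ : V →L[ℝ] ℝ, ∀ z : Z, ψ (Z.subtypeL z) = χ z := by
  obtain ⟨ψ, hψ, _⟩ := exists_extension_norm_eq Z χ
  exact ⟨ψ, hψ⟩

lemma reflexive_of_ei (Z : Submodule ℝ L1) (hZc : IsClosed (Z : Set L1)) (hE : EI Z) :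
    Function.Surjective (NormedSpace.inclusionInDoubleDual ℝ ↥Z) := by
  refine reflexive_abs (E := ↥Z) Z.subtypeL ?_ (fun χ => ext_abs Z χ) ?_
  · intro ε hε
    obtain ⟨δ, hδ, H⟩ := hE ε hε
    exact ⟨δ, hδ, fun z hz A hA hm => H z z.2 (le_of_eq hz) A hA hm⟩
  · intro z0 h0
    by_contra hne
    have hnot : z0 ∉ (Z : Set L1) := fun h => hne ⟨⟨z0, h⟩, rfl⟩
    obtain ⟨ψ, u, h1, h2⟩ := geometric_hahn_banach_closed_point Z.convex hZc hnot
    have hu : 0 < u := by simpa using h1 0 Z.zero_mem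
    have hvan : ∀ z ∈ Z, ψ z = 0 := by
      intro z hz
      by_contra hne
      have := h1 ((u / ψ z) • z) (Z.smul_mem _ hz)
      rw [map_smul, smul_eq_mul, div_mul_cancel₀ _ hne] at this
      exact lt_irrefl _ this
    have := h0 ψ (fun z => hvan z z.2)
    linarith

end QD

/-- If a closed subspace `Z ⊆ L¹[0,1]` contains no subspace isomorphic to `ℓ¹`, then
`Z` is reflexive (the canonical embedding into the double dual is surjective) and the
quotient `L¹[0,1]/Z` has the Daugavet property. -/
theorem quotient_daugavet_of_no_ell1_L1
    (Z : Submodule ℝ L1) (hZc : IsClosed (Z : Set L1))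
    (hno : ¬ ∃ W : Submodule ℝ L1, W ≤ Z ∧ Nonempty (↥W ≃L[ℝ] ell1)) :
    Function.Surjective (NormedSpace.inclusionInDoubleDual ℝ ↥Z) ∧
      DaugavetProperty (L1 ⧸ Z) := by
  have hE := QD.ei_of_no_ell1 Z hZc hno
  exact ⟨QD.reflexive_of_ei Z hZc hE, QD.daugavet_of_ei Z hE⟩
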